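/- arXiv:1306.2114 — 4 statements merged into one kernel-verified Lean document; each statement's English description precedes it below -/
import Mathlib

section
/- For every integer k ≥ 3, every proper induced subgraph of Z_k is isomorphic to an induced subgraph of J_k − z_g, where g = (k−1)(k+1). -/
/-- The `k`-path power on `n` vertices (0-indexed: vertex `i : Fin n` represents
vertex `i+1`): distinct vertices are adjacent iff their indices differ by at most `k`. -/
def pathPower (k n : ℕ) : SimpleGraph (Fin n) :=
  SimpleGraph.fromRel (fun i j => |(i.val : ℤ) - (j.val : ℤ)| ≤ k)

/-- `G - x`: the induced subgraph of `G` on all vertices other than `x`. -/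
def deleteVert {V : Type*} (G : SimpleGraph V) (x : V) : SimpleGraph {y : V // y ∈ {y : V | y ≠ x}} :=
  G.induce {y : V | y ≠ x}

/-- The graph `Z_k`: the `k`-path power on `k(k+1)+2` vertices. -/
def Zgraph (k : ℕ) : SimpleGraph (Fin (k * (k + 1) + 2)) :=
  pathPower k (k * (k + 1) + 2)

/-- The graph `J_k`: the `k`-path power on `(2k-1)(k+1)+1` vertices. -/
def Jgraph (k : ℕ) : SimpleGraph (Fin ((2 * k - 1) * (k + 1) + 1)) :=
  pathPower k ((2 * k - 1) * (k + 1) + 1)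

theorem emb_aux {k n m : ℕ} (zg : Fin m) (s : Set (Fin n)) (f : Fin n → ℕ) (hf : ∀ i, f i < m)
    (hne : ∀ i ∈ s, f i ≠ zg)
    (hd : ∀ i j, |(f i : ℤ) - (f j : ℤ)| = |(i.val : ℤ) - (j.val : ℤ)|) :
    Nonempty ((pathPower k n).induce s ↪g deleteVert (pathPower k m) zg) := by
  have hinj : ∀ i j, f i = f j ↔ i = j := by
    intro i j
    constructor
    · intro h
      have := hd i j
      rw [h, sub_self, abs_zero, eq_comm, abs_eq_zero] at this
      exact Fin.ext (by omega)
    · rintro rfl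
      rfl
  refine ⟨⟨⟨fun i => ⟨⟨f i.1, hf _⟩, fun h => hne i.1 i.2 (congrArg Fin.val h)⟩, ?_⟩, ?_⟩⟩
  · intro a b h
    have h1 : f a.1 = f b.1 := congrArg (fun x => x.1.val) h
    exact Subtype.ext ((hinj _ _).1 h1)
  · intro a b
    change (pathPower k m).Adj ⟨f a.1, hf _⟩ ⟨f b.1, hf _⟩ ↔ (pathPower k n).Adj a.1 b.1
    simp [pathPower, hd, hinj]

/-- For `k ≥ 3`, every proper induced subgraph of `Z_k` (induced on a proper subset `s`
of its vertex set) is isomorphic to an induced subgraph of `J_k - z_g`, where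
`g = (k-1)(k+1)` (`zg` is the vertex of 0-based index `g - 1`). -/
theorem proper_induced_subgraph_Zk_embeds (k : ℕ) (hk : 3 ≤ k)
    (zg : Fin ((2 * k - 1) * (k + 1) + 1)) (hzg : (zg : ℕ) = (k - 1) * (k + 1) - 1)
    (s : Set (Fin (k * (k + 1) + 2))) (hs : s ≠ Set.univ) :
    Nonempty ((Zgraph k).induce s ↪g deleteVert (Jgraph k) zg) := by
  obtain ⟨j, hj⟩ := (Set.ne_univ_iff_exists_notMem s).1 hs
  have hG : (zg : ℕ) + 2 = k * k := by
    obtain ⟨t, rfl⟩ : ∃ t, k = t + 3 := ⟨k - 3, by omega⟩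
    rw [hzg]
    have : (t + 3 - 1) * (t + 3 + 1) = t * t + 6 * t + 8 := by
      rw [show t + 3 - 1 = t + 2 by omega]; ring
    rw [this]
    have : (t + 3) * (t + 3) = t * t + 6 * t + 9 := by ring
    omega
  have hm : (2 * k - 1) * (k + 1) + 1 = 2 * (k * k) + k := by
    obtain ⟨t, rfl⟩ : ∃ t, k = t + 3 := ⟨k - 3, by omega⟩
    rw [show 2 * (t + 3) - 1 = 2 * t + 5 by omega]; ring
  have hn : k * (k + 1) + 2 = k * k + k + 2 := by ring
  have hkk : 3 * k ≤ k * k := Nat.mul_le_mul_right k hk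
  have hjl := j.isLt
  by_cases hc : j.val ≤ zg.val
  · apply emb_aux zg s (fun i => i.val + zg.val - j.val)
    · intro i
      have := i.isLt
      omega
    · intro i hi h
      apply hj
      have : i = j := Fin.ext (by omega)
      exact this ▸ hi
    · intro a b
      congr 1
      omega
  · apply emb_aux zg s (fun i => zg.val + j.val - i.val)
    · intro i
      have := i.isLt
      omega
    · intro i hi h
      apply hj
      have := i.isLt
      have : i = j := Fin.ext (by omega)
      exact this ▸ hi
    · intro a b
      have := a.isLt
      have := b.isLt
      rw [abs_sub_comm (a.val : ℤ)]
      congr 1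
      omega
end

section
/- Let k ≥ 3, n = (k−1)(k+1)+2 and g = (k−1)(k+1). Let t be an integer with 1 ≤ t and 2t ≤ ((k−1)(k+1)+1) + 2 (i.e., t ≤ ((k−1)(k+1)+1)/2 + 1), and suppose (k, t) ≠ (3, 5). Then for each of the four neighbourhood cases a, b, c, d of w^+, the graph S^+_k − v_t is isomorphic to an induced subgraph of J_k − z_g. -/
/-- Vertices of the graph `S^+_k` (with `n = (k-1)(k+1)+2` path-power vertices):
`v i` represents `v_{i+1}`, together with `w_1, w_2, w_3, w_4` and `w^+`. -/
inductive SPVert (n : ℕ) where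
  | v (i : Fin n)
  | w1 | w2 | w3 | w4
  | wp

/-- The graph `S^+_k` on path-power part of size `n`, where the neighbourhood of the
extra vertex `w^+` is the set `A`:  the vertices `v_1, …, v_n` induce a `k`-path power,
with the additional edges `w_1w_2`, `w_2v_1`, `v_nw_3`, `w_3w_4`, and `w^+` joined to `A`. -/
def SPlusGraph (k n : ℕ) (A : Set (SPVert n)) : SimpleGraph (SPVert n) :=
  SimpleGraph.fromRel (fun x y =>
    (∃ i j : Fin n, x = .v i ∧ y = .v j ∧ |(i.val : ℤ) - (j.val : ℤ)| ≤ k) ∨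
    (x = .w1 ∧ y = .w2) ∨
    (∃ i : Fin n, x = .w2 ∧ y = .v i ∧ i.val = 0) ∨
    (∃ i : Fin n, x = .v i ∧ i.val = n - 1 ∧ y = .w3) ∨
    (x = .w3 ∧ y = .w4) ∨
    (x = .wp ∧ y ∈ A))

/-- Case-a neighbourhood of `w^+`: `{w_1, w_2, v_1, …, v_k}`. -/
def caseA (k n : ℕ) : Set (SPVert n) :=
  {x | x = .w1 ∨ x = .w2 ∨ ∃ i : Fin n, x = .v i ∧ i.val < k}

/-- Case-b neighbourhood of `w^+`: `{v_{n-k+1}, …, v_n, w_3, w_4}`. -/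
def caseB (k n : ℕ) : Set (SPVert n) :=
  {x | x = .w3 ∨ x = .w4 ∨ ∃ i : Fin n, x = .v i ∧ n - k ≤ i.val}

/-- Case-c neighbourhood of `w^+`: `{w_1, w_2, v_1, …, v_{k-1}}`. -/
def caseC (k n : ℕ) : Set (SPVert n) :=
  {x | x = .w1 ∨ x = .w2 ∨ ∃ i : Fin n, x = .v i ∧ i.val < k - 1}

/-- Case-d neighbourhood of `w^+`: `{v_{n-k+2}, …, v_n, w_3, w_4}`. -/
def caseD (k n : ℕ) : Set (SPVert n) :=
  {x | x = .w3 ∨ x = .w4 ∨ ∃ i : Fin n, x = .v i ∧ n - k + 1 ≤ i.val}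

def posMap (k n P q : ℕ) : SPVert n → ℕ
  | .v i => P + i.val
  | .w1 => P - k - 1
  | .w2 => P - k
  | .w3 => P + n - 1 + k
  | .w4 => P + n + k
  | .wp => q

lemma embed_of_pos {n m k : ℕ} (A : Set (SPVert n)) (i : Fin n) (zg : Fin m)
    (f : SPVert n → ℕ) (hinj : Function.Injective f) (hlt : ∀ x, f x < m)
    (hz : f (.v i) = zg)
    (hadj : ∀ x y, x ≠ y → ((SPlusGraph k n A).Adj x y ↔ |(f x : ℤ) - (f y : ℤ)| ≤ k)) :
    Nonempty (deleteVert (SPlusGraph k n A) (.v i) ↪g deleteVert (pathPower k m) zg) := by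
  refine ⟨⟨⟨fun x => ⟨⟨f x.1, hlt _⟩, ?_⟩, ?_⟩, ?_⟩⟩
  · intro h
    apply x.2
    apply hinj
    rw [hz, ← h]
  · intro x y h
    simp only [Subtype.mk.injEq, Fin.mk.injEq] at h
    exact Subtype.ext (hinj h)
  · rintro ⟨x, hx⟩ ⟨y, hy⟩
    by_cases hxy : x = y
    · subst hxy
      simp
    · have h1 := hadj x y hxy
      have h2 : f x ≠ f y := fun h => hxy (hinj h)
      change (pathPower k m).Adj ⟨f x, hlt x⟩ ⟨f y, hlt y⟩ ↔ (SPlusGraph k n A).Adj x y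
      simp [pathPower, SimpleGraph.fromRel_adj, h1, h2, abs_sub_comm (f y : ℤ) (f x : ℤ)]

set_option maxHeartbeats 4000000 in
lemma embed_core {n m k P q : ℕ} (hk : 3 ≤ k) (hn : 3 * k < n) (hP : k + 1 ≤ P)
    (hm : P + n + k < m) (A : Set (SPVert n)) (i : Fin n) (zg : Fin m) (hz : P + i.val = zg.val)
    (hA : (A = caseA k n ∧ q = P - 1) ∨ (A = caseB k n ∧ q = P + n) ∨
      (A = caseC k n ∧ q = P - 2) ∨ (A = caseD k n ∧ q = P + n + 1)) :
    Nonempty (deleteVert (SPlusGraph k n A) (.v i) ↪g deleteVert (pathPower k m) zg) := by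
  have hq : (q = P - 1 ∨ q = P + n) ∨ (q = P - 2 ∨ q = P + n + 1) := by tauto
  apply embed_of_pos A i zg (posMap k n P q)
  · intro x y h
    rcases x with a | _ | _ | _ | _ | _ <;> rcases y with b | _ | _ | _ | _ | _ <;>
      simp only [posMap, SPVert.v.injEq, reduceCtorEq, Fin.ext_iff] at h ⊢ <;> omega
  · intro x
    rcases x with a | _ | _ | _ | _ | _ <;> simp only [posMap] <;> omega
  · exact hz
  · intro x y hxy
    rcases hA with ⟨rfl, hq⟩ | ⟨rfl, hq⟩ | ⟨rfl, hq⟩ | ⟨rfl, hq⟩ <;>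
    rcases x with a | _ | _ | _ | _ | _ <;> rcases y with b | _ | _ | _ | _ | _ <;>
      simp [posMap, SPlusGraph, caseA, caseB, caseC, caseD, abs_le] at hxy ⊢ <;>
      (try simp only [Fin.ext_iff] at *) <;> omega

/-- Let `k ≥ 3`, `n = (k-1)(k+1)+2`, `g = (k-1)(k+1)`.  Let `1 ≤ t` with
`2t ≤ ((k-1)(k+1)+1) + 2` (i.e. `t ≤ ((k-1)(k+1)+1)/2 + 1`), and `(k, t) ≠ (3, 5)`.
Then for each of the four neighbourhood cases a, b, c, d of `w^+`, the graph
`S^+_k - v_t` is isomorphic to an induced subgraph of `J_k - z_g`.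
Here `i` is the 0-based index `t - 1` of `v_t` and `zg` has 0-based index `g - 1`. -/
theorem SPlus_minus_vt_embeds (k t : ℕ) (hk : 3 ≤ k) (ht1 : 1 ≤ t)
    (ht2 : 2 * t ≤ ((k - 1) * (k + 1) + 1) + 2) (hkt : ¬(k = 3 ∧ t = 5))
    (i : Fin ((k - 1) * (k + 1) + 2)) (hi : (i : ℕ) = t - 1)
    (zg : Fin ((2 * k - 1) * (k + 1) + 1)) (hzg : (zg : ℕ) = (k - 1) * (k + 1) - 1) :
    Nonempty (deleteVert (SPlusGraph k ((k - 1) * (k + 1) + 2)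
        (caseA k ((k - 1) * (k + 1) + 2))) (.v i) ↪g deleteVert (Jgraph k) zg) ∧
    Nonempty (deleteVert (SPlusGraph k ((k - 1) * (k + 1) + 2)
        (caseB k ((k - 1) * (k + 1) + 2))) (.v i) ↪g deleteVert (Jgraph k) zg) ∧
    Nonempty (deleteVert (SPlusGraph k ((k - 1) * (k + 1) + 2)
        (caseC k ((k - 1) * (k + 1) + 2))) (.v i) ↪g deleteVert (Jgraph k) zg) ∧
    Nonempty (deleteVert (SPlusGraph k ((k - 1) * (k + 1) + 2)
        (caseD k ((k - 1) * (k + 1) + 2))) (.v i) ↪g deleteVert (Jgraph k) zg) := by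
  obtain ⟨r, rfl⟩ : ∃ r, k = r + 3 := ⟨k - 3, by omega⟩
  have e1 : (r + 3 - 1) * (r + 3 + 1) = r * r + 6 * r + 8 := by
    rw [show r + 3 - 1 = r + 2 by omega]; ring
  have e2 : (2 * (r + 3) - 1) * (r + 3 + 1) = 2 * (r * r) + 13 * r + 20 := by
    rw [show 2 * (r + 3) - 1 = 2 * r + 5 by omega]; ring
  have hr : r ≤ r * r := Nat.le_mul_self r
  have h1 : r + 3 + 1 ≤ zg.val - i.val := by
    rcases Nat.eq_zero_or_pos r with h | h
    · subst h
      have : t ≠ 5 := fun h => hkt ⟨rfl, h⟩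
      omega
    · omega
  have h2 : 3 * (r + 3) < (r + 3 - 1) * (r + 3 + 1) + 2 := by omega
  have h3 : (zg.val - i.val) + ((r + 3 - 1) * (r + 3 + 1) + 2) + (r + 3) <
      (2 * (r + 3) - 1) * (r + 3 + 1) + 1 := by omega
  have h4 : (zg.val - i.val) + i.val = zg.val := by omega
  exact ⟨embed_core hk h2 h1 h3 _ i zg h4 (Or.inl ⟨rfl, rfl⟩),
    embed_core hk h2 h1 h3 _ i zg h4 (Or.inr (Or.inl ⟨rfl, rfl⟩)),
    embed_core hk h2 h1 h3 _ i zg h4 (Or.inr (Or.inr (Or.inl ⟨rfl, rfl⟩))),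
    embed_core hk h2 h1 h3 _ i zg h4 (Or.inr (Or.inr (Or.inr ⟨rfl, rfl⟩)))⟩
end

section
/- For every integer k ≥ 3, the graph S^+_k − w_4, where S^+_k is obtained with the case-c neighbourhood of w^+, is isomorphic to an induced subgraph of J_k − z_g, where g = (k−1)(k+1). -/
def embPos (k q n : ℕ) : SPVert n → ℕ
  | .v i => q - 1 + i.val
  | .w1 => q - k - 2
  | .w2 => q - k - 1
  | .w3 => 2 * q + k - 1
  | .w4 => 0
  | .wp => q - 3

set_option maxHeartbeats 1000000 in
theorem embed_aux (k q n M : ℕ) (hk : 3 ≤ k) (hq : 3 * k ≤ q) (hn : n = q + 1)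
    (hM : M = 2 * q + k) (zg : Fin M) (hzg : (zg : ℕ) = q - 2) :
    Nonempty (deleteVert (SPlusGraph k n (caseC k n)) SPVert.w4 ↪g
      deleteVert (pathPower k M) zg) := by
  have hlt : ∀ x : SPVert n, x ≠ .w4 → embPos k q n x < M := by
    intro x hx
    cases x <;> simp only [embPos] <;> omega
  have hne : ∀ x : SPVert n, x ≠ .w4 → embPos k q n x ≠ q - 2 := by
    intro x hx
    cases x <;> simp only [embPos, ne_eq, not_true_eq_false] at * <;> omega
  have hinj : ∀ x y : SPVert n, x ≠ .w4 → y ≠ .w4 →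
      embPos k q n x = embPos k q n y → x = y := by
    intro x y hx hy h
    cases x <;> cases y <;>
      simp only [embPos, ne_eq, not_true_eq_false, SPVert.v.injEq, Fin.ext_iff, reduceCtorEq] at * <;> omega
  refine ⟨⟨⟨fun x => ⟨⟨embPos k q n x.1, hlt x.1 x.2⟩, ?_⟩, ?_⟩, ?_⟩⟩
  · intro h
    apply hne x.1 x.2
    rw [← hzg, ← h]
  · rintro ⟨x, hx⟩ ⟨y, hy⟩ h
    simp only [Subtype.mk.injEq, Fin.mk.injEq] at h
    exact Subtype.ext (hinj x y hx hy h)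
  · rintro ⟨x, hx⟩ ⟨y, hy⟩
    have hx' : x ≠ .w4 := hx
    have hy' : y ≠ .w4 := hy
    change (pathPower k M).Adj ⟨embPos k q n x, hlt x hx⟩ ⟨embPos k q n y, hlt y hy⟩ ↔
      (SPlusGraph k n (caseC k n)).Adj x y
    simp only [pathPower, SPlusGraph, SimpleGraph.fromRel_adj, ne_eq, Fin.mk.injEq, caseC,
      Set.mem_ofPred_eq]
    clear hlt hne hinj hx hy
    cases x <;> cases y <;>
      first
      | exact absurd rfl hx'
      | exact absurd rfl hy'
      | (simp only [embPos, SPVert.v.injEq, reduceCtorEq, false_and, and_false, or_false, false_or,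
          exists_false, and_true, true_and, exists_eq_left', exists_and_left,
          not_true_eq_false, not_false_eq_true, or_true, true_or, iff_true, iff_false]
         try simp only [Fin.ext_iff, abs_le]
         all_goals omega)

/-- For `k ≥ 3` (with `n = (k-1)(k+1)+2` and `g = (k-1)(k+1)`), the graph
`S^+_k - w_4`, where `S^+_k` is obtained with the case-c neighbourhood of `w^+`,
is isomorphic to an induced subgraph of `J_k - z_g`
(`zg` has 0-based index `g - 1`). -/
theorem SPlusC_minus_w4_embeds (k : ℕ) (hk : 3 ≤ k)
    (zg : Fin ((2 * k - 1) * (k + 1) + 1)) (hzg : (zg : ℕ) = (k - 1) * (k + 1) - 1) :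
    Nonempty (deleteVert (SPlusGraph k ((k - 1) * (k + 1) + 2)
        (caseC k ((k - 1) * (k + 1) + 2))) SPVert.w4 ↪g deleteVert (Jgraph k) zg) := by
  obtain ⟨m, rfl⟩ : ∃ m, k = m + 1 := ⟨k - 1, by omega⟩
  have h1 : (m + 1 - 1) * (m + 1 + 1) + 1 = (m + 1) * (m + 1) := by
    simp only [Nat.add_sub_cancel]; ring
  have h2 : (2 * (m + 1) - 1) * (m + 1 + 1) + 1 = 2 * ((m + 1) * (m + 1)) + (m + 1) := by
    have : 2 * (m + 1) - 1 = 2 * m + 1 := by omega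
    rw [this]; ring
  have h3 : 3 * (m + 1) ≤ (m + 1) * (m + 1) := Nat.mul_le_mul_right _ hk
  exact embed_aux (m + 1) ((m + 1) * (m + 1)) _ _ hk h3 (by omega) h2 zg (by omega)
end

section
/- For every integer k ≥ 3, the graph S^+_k − w_4, where S^+_k is obtained with the case-a neighbourhood of w^+, is NOT isomorphic to any induced subgraph of J_k − z_g, where g = (k−1)(k+1). -/
theorem core_step (k n : ℕ) (hk : 3 ≤ k) (hn : 2 * k + 1 ≤ n) (x : ℕ → ℤ)
    (inj : ∀ i j, i < j → j ≤ n → x i ≠ x j)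
    (adj : ∀ i j, i < j → j ≤ n → j ≤ i + k → |x i - x j| ≤ k)
    (nadj : ∀ i j, i < j → j ≤ n → i + k < j → (k : ℤ) < |x i - x j|)
    (h0 : x 0 < x (k + 1)) : ∀ i, i ≤ n → x i = x 0 + i := by
  have bet : ∀ i j, i + k + 1 ≤ n → x i < x (i + k + 1) → i < j → j < i + k + 1 →
      x i < x j ∧ x j < x (i + k + 1) := by
    intro i j h1 h2 h3 h4
    have a := nadj i (i + k + 1) (by omega) h1 (by omega)
    have b := adj i j h3 (by omega) (by omega)
    have c := adj j (i + k + 1) h4 (by omega) (by omega)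
    rw [abs_le] at b c
    rw [lt_abs] at a
    omega
  have P : ∀ i, i + k + 1 ≤ n → x i < x (i + k + 1) := by
    intro i
    induction i with
    | zero => intro _; simpa using h0
    | succ i ih =>
      intro h1
      have h2 := ih (by omega)
      have h3 := bet i (i + 1) (by omega) h2 (by omega) (by omega)
      have a := nadj (i + 1) (i + 1 + k + 1) (by omega) h1 (by omega)
      have b := adj (i + k + 1) (i + 1 + k + 1) (by omega) h1 (by omega)
      rw [abs_le] at b
      rw [lt_abs] at a
      omega
  have S : ∀ i, i + 1 ≤ n → x i + 1 ≤ x (i + 1) := by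
    intro i hi
    by_cases h : i + k + 1 ≤ n
    · have := bet i (i + 1) h (P i h) (by omega) (by omega)
      omega
    · obtain ⟨j, rfl⟩ : ∃ j, i = j + k := ⟨i - k, by omega⟩
      have := bet j (j + k) hi (P j hi) (by omega) (by omega)
      omega
  have L : ∀ d i, i + d ≤ n → x i + d ≤ x (i + d) := by
    intro d
    induction d with
    | zero => intro i _; simp
    | succ d ih =>
      intro i hi
      have h1 := ih i (by omega)
      have h2 := S (i + d) (by omega)
      rw [show i + (d + 1) = i + d + 1 by ring]
      push_cast
      omega
  have T : ∀ i, i + 1 ≤ n → x (i + 1) = x i + 1 := by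
    intro i hi
    have s := S i hi
    by_cases h : i + k ≤ n
    · have a := adj i (i + k) (by omega) h (by omega)
      have l := L (k - 1) (i + 1) (by omega)
      rw [show i + 1 + (k - 1) = i + k by omega] at l
      rw [abs_le] at a
      omega
    · obtain ⟨j, rfl⟩ : ∃ j, i = j + (k - 1) := ⟨i - (k - 1), by omega⟩
      have a := adj j (j + (k - 1) + 1) (by omega) hi (by omega)
      have l := L (k - 1) j (by omega)
      rw [abs_le] at a
      omega
  intro i
  induction i with
  | zero => intro _; simp
  | succ i ih =>
    intro hi
    rw [T i hi, ih (by omega)]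
    push_cast
    ring

theorem core_inc (k n : ℕ) (hk : 3 ≤ k) (hn : n = k * k + 1) (x : ℕ → ℤ) (a c h : ℤ)
    (inj : ∀ i j, i < j → j ≤ n → x i ≠ x j)
    (adj : ∀ i j, i < j → j ≤ n → j ≤ i + k → |x i - x j| ≤ k)
    (nadj : ∀ i j, i < j → j ≤ n → i + k < j → (k : ℤ) < |x i - x j|)
    (ha0 : |a - x 0| ≤ k) (ha1 : (k : ℤ) < |a - x 1|)
    (hcn : |c - x n| ≤ k) (hc1 : (k : ℤ) < |c - x (n - 1)|)
    (ha : 0 ≤ a) (hc : c ≤ 2 * (k * k) + k - 1)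
    (hx : ∀ i, i ≤ n → x i ≠ h)
    (hh : (k : ℤ) * k - 2 ≤ h) (hh' : h ≤ (k : ℤ) * k + k + 1)
    (h0 : x 0 < x (k + 1)) : False := by
  have hkk : 3 * k ≤ k * k := Nat.mul_le_mul_right k hk
  have E := core_step k n hk (by omega) x inj adj nadj h0
  have e1 := E 1 (by omega)
  have en := E n le_rfl
  have em := E (n - 1) (by omega)
  rw [e1] at ha1
  rw [en] at hcn
  rw [em] at hc1
  rw [abs_le] at ha0 hcn
  rw [lt_abs] at ha1 hc1
  have hn' : (n : ℤ) = (k : ℤ) * k + 1 := by rw [hn]; push_cast; ring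
  have hm : ((n - 1 : ℕ) : ℤ) = (k : ℤ) * k := by rw [hn]; push_cast; ring
  have hx0 := hx (h - x 0).toNat
  have hx1 := E (h - x 0).toNat
  rw [hn'] at hcn
  rw [hm] at hc1
  generalize (k : ℤ) * k = q at *
  have : x 0 ≤ h ∧ h ≤ x 0 + q + 1 := by push_cast at *; omega
  have hle : (h - x 0).toNat ≤ n := by omega
  apply hx0 hle
  rw [hx1 hle]
  omega

theorem core (k n : ℕ) (hk : 3 ≤ k) (hn : n = k * k + 1) (x : ℕ → ℤ) (a c h : ℤ)
    (inj : ∀ i j, i < j → j ≤ n → x i ≠ x j)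
    (adj : ∀ i j, i < j → j ≤ n → j ≤ i + k → |x i - x j| ≤ k)
    (nadj : ∀ i j, i < j → j ≤ n → i + k < j → (k : ℤ) < |x i - x j|)
    (ha0 : |a - x 0| ≤ k) (ha1 : (k : ℤ) < |a - x 1|)
    (hcn : |c - x n| ≤ k) (hc1 : (k : ℤ) < |c - x (n - 1)|)
    (ha : 0 ≤ a) (hc : c ≤ 2 * (k * k) + k - 1)
    (ha' : a ≤ 2 * (k * k) + k - 1) (hc' : 0 ≤ c)
    (hx : ∀ i, i ≤ n → x i ≠ h)
    (hh : (k : ℤ) * k - 2 ≤ h) (hh' : h ≤ (k : ℤ) * k + k + 1) : False := by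
  have hkk : 3 * k ≤ k * k := Nat.mul_le_mul_right k hk
  rcases lt_or_gt_of_ne (inj 0 (k + 1) (by omega) (by omega)) with h0 | h0
  · exact core_inc k n hk hn x a c h inj adj nadj ha0 ha1 hcn hc1 ha hc hx hh hh' h0
  · set M : ℤ := 2 * (k * k) + k - 1 with hM
    have key : ∀ p q : ℤ, |(M - p) - (M - q)| = |p - q| := by
      intro p q
      rw [show (M - p) - (M - q) = -(p - q) by ring, abs_neg]
    refine core_inc k n hk hn (fun i => M - x i) (M - a) (M - c) (M - h) ?_ ?_ ?_ ?_ ?_ ?_ ?_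
      ?_ ?_ ?_ ?_ ?_ ?_
    · intro i j h1 h2 h3
      exact inj i j h1 h2 (by simpa using h3)
    · intro i j h1 h2 h3
      simpa only [key] using adj i j h1 h2 h3
    · intro i j h1 h2 h3
      simpa only [key] using nadj i j h1 h2 h3
    · simpa only [key] using ha0
    · simpa only [key] using ha1
    · simpa only [key] using hcn
    · simpa only [key] using hc1
    · omega
    · omega
    · intro i h1 h2
      exact hx i h1 (by simpa using h2)
    · omega
    · omega
    · show M - x 0 < M - x (k + 1)
      omega

/-- The vertices `w^+, v_1, …, v_n` as a sequence. -/
def sVert (n : ℕ) (i : ℕ) : SPVert n :=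
  if h : 0 < i ∧ i - 1 < n then .v ⟨i - 1, h.2⟩ else .wp

theorem Jgraph_adj (k : ℕ) (a b : Fin ((2 * k - 1) * (k + 1) + 1)) (h : a ≠ b) :
    (Jgraph k).Adj a b ↔ |(a.val : ℤ) - (b.val : ℤ)| ≤ k := by
  simp only [Jgraph, pathPower, SimpleGraph.fromRel_adj]
  rw [abs_sub_comm (b.val : ℤ)]
  simp [h]

theorem SPlusA_minus_w4_not_embeddable (k : ℕ) (hk : 3 ≤ k)
    (zg : Fin ((2 * k - 1) * (k + 1) + 1)) (hzg : (zg : ℕ) = (k - 1) * (k + 1) - 1) :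
    IsEmpty (deleteVert (SPlusGraph k ((k - 1) * (k + 1) + 2)
        (caseA k ((k - 1) * (k + 1) + 2))) SPVert.w4 ↪g deleteVert (Jgraph k) zg) := by
  constructor
  intro f
  have hkk : 3 * k ≤ k * k := Nat.mul_le_mul_right k hk
  have hg : (k - 1) * (k + 1) = k * k - 1 := by
    obtain ⟨r, rfl⟩ : ∃ r, k = r + 1 := ⟨k - 1, by omega⟩
    simp only [Nat.add_sub_cancel]
    have : (r + 1) * (r + 1) = r * (r + 1 + 1) + 1 := by ring
    omega
  have hm : (2 * k - 1) * (k + 1) + 1 = 2 * (k * k) + k := by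
    obtain ⟨r, rfl⟩ : ∃ r, k = r + 1 := ⟨k - 1, by omega⟩
    rw [show 2 * (r + 1) - 1 = 2 * r + 1 by omega]
    ring
  generalize hN : (k - 1) * (k + 1) + 2 = n at f
  have hn : n = k * k + 1 := by omega
  have hp : ∃ p : SPVert n → ℤ, ∀ u, u ≠ .w4 → (0 ≤ p u ∧ p u ≤ 2 * (k * k) + k - 1 ∧
      p u ≠ (k : ℤ) * k - 2) ∧ ∀ v, v ≠ .w4 → u ≠ v → (p u ≠ p v ∧
        ((SPlusGraph k n (caseA k n)).Adj u v ↔ |p u - p v| ≤ k)) := by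
    classical
    refine ⟨fun u => if h : u ≠ .w4 then ((f ⟨u, h⟩).1.val : ℤ) else 0, ?_⟩
    intro u hu
    simp only [hu, ne_eq, not_false_eq_true, dite_true]
    refine ⟨⟨by positivity, ?_, ?_⟩, ?_⟩
    · have := (f ⟨u, hu⟩).1.isLt
      have h3 := lt_of_lt_of_eq this hm
      zify at h3
      exact Int.le_sub_one_of_lt h3
    · intro h
      apply (f ⟨u, hu⟩).2
      apply Fin.ext
      rw [hzg, hg]
      generalize (f ⟨u, hu⟩).1.val = t at *
      zify
      rw [h]
      have : 2 ≤ k * k := by omega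
      rw [Nat.sub_sub, Nat.cast_sub this]
      push_cast; ring
    · intro v hv huv
      simp only [hv, not_false_eq_true, dite_true]
      have hne : (f ⟨u, hu⟩).1 ≠ (f ⟨v, hv⟩).1 := by
        intro h
        have := f.injective (Subtype.ext h)
        exact huv (congrArg Subtype.val this)
      refine ⟨?_, ?_⟩
      · intro h
        exact hne (Fin.ext (by exact_mod_cast h))
      · have := f.map_adj_iff (v := ⟨u, hu⟩) (w := ⟨v, hv⟩)
        have h2 : (SPlusGraph k n (caseA k n)).Adj u v ↔ (Jgraph k).Adj (f ⟨u, hu⟩).1 (f ⟨v, hv⟩).1 := this.symm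
        rw [h2]
        exact Jgraph_adj k _ _ hne
  obtain ⟨p, hp⟩ := hp
  have s4 : ∀ i, sVert n i ≠ .w4 := by
    intro i; unfold sVert; split_ifs <;> simp
  have s1 : ∀ i, sVert n i ≠ .w1 := by
    intro i; unfold sVert; split_ifs <;> simp
  have s3 : ∀ i, sVert n i ≠ .w3 := by
    intro i; unfold sVert; split_ifs <;> simp
  have sS : ∀ i (h : i < n), sVert n (i + 1) = .v ⟨i, h⟩ := by
    intro i h; simp [sVert, h]
  have s0 : sVert n 0 = .wp := by simp [sVert]
  have sne : ∀ i j, i < j → j ≤ n → sVert n i ≠ sVert n j := by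
    intro i j hij hj
    obtain ⟨j, rfl⟩ : ∃ t, j = t + 1 := ⟨j - 1, by omega⟩
    rw [sS j (by omega)]
    rcases i with _ | i
    · simp [s0]
    · rw [sS i (by omega)]
      simp; omega
  have sadj : ∀ i j, i < j → j ≤ n →
      ((SPlusGraph k n (caseA k n)).Adj (sVert n i) (sVert n j) ↔ j ≤ i + k) := by
    intro i j hij hj
    have hne := sne i j hij hj
    obtain ⟨j, rfl⟩ : ∃ t, j = t + 1 := ⟨j - 1, by omega⟩
    rw [sS j (by omega)] at hne ⊢
    rcases i with _ | i
    · rw [s0]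
      simp [SPlusGraph, caseA]
    · rw [sS i (by omega)] at hne ⊢
      simp only [SPlusGraph, SimpleGraph.fromRel_adj]
      simp [abs_le]
      omega
  have a0 : (SPlusGraph k n (caseA k n)).Adj .w1 (sVert n 0) := by
    rw [s0]; simp [SPlusGraph, caseA]
  have a1 : ¬ (SPlusGraph k n (caseA k n)).Adj .w1 (sVert n 1) := by
    rw [sS 0 (by omega)]; simp [SPlusGraph, caseA]
  have c0 : (SPlusGraph k n (caseA k n)).Adj .w3 (sVert n n) := by
    have := sS (n - 1) (by omega)
    rw [show n - 1 + 1 = n by omega] at this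
    rw [this]; simp [SPlusGraph, caseA]
  have c1 : ¬ (SPlusGraph k n (caseA k n)).Adj .w3 (sVert n (n - 1)) := by
    have := sS (n - 2) (by omega)
    rw [show n - 2 + 1 = n - 1 by omega] at this
    rw [this]; simp [SPlusGraph, caseA]; omega
  have b1 := hp .w1 (by simp)
  have b3 := hp .w3 (by simp)
  refine core k n hk hn (fun i => p (sVert n i)) (p .w1) (p .w3) ((k : ℤ) * k - 2) ?_ ?_ ?_
    ((b1.2 _ (s4 _) (s1 _).symm).2.1 a0) ?_ ((b3.2 _ (s4 _) (s3 _).symm).2.1 c0) ?_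
    b1.1.1 b3.1.2.1 b1.1.2.1 b3.1.1 ?_ le_rfl (by omega)
  · intro i j h1 h2
    exact ((hp _ (s4 i)).2 _ (s4 j) (sne i j h1 h2)).1
  · intro i j h1 h2 h3
    exact ((hp _ (s4 i)).2 _ (s4 j) (sne i j h1 h2)).2.1 ((sadj i j h1 h2).2 h3)
  · intro i j h1 h2 h3
    rw [← not_le]
    intro h4
    have := (sadj i j h1 h2).1 (((hp _ (s4 i)).2 _ (s4 j) (sne i j h1 h2)).2.2 h4)
    omega
  · rw [← not_le]
    intro h4
    exact a1 ((b1.2 _ (s4 _) (s1 _).symm).2.2 h4)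
  · rw [← not_le]
    intro h4
    exact c1 ((b3.2 _ (s4 _) (s3 _).symm).2.2 h4)
  · intro i _
    exact (hp _ (s4 i)).1.2.2
end
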